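/- Let G be a consistently locally constructible graph. Then G is a weak cop win. -/

import Mathlib

universe u

/-- `y` dominates `x` in `G`: `y ≠ x` and the closed neighbourhood of `x` is contained
in the closed neighbourhood of `y`. -/
def Dominates {V : Type u} (G : SimpleGraph V) (y x : V) : Prop :=
  y ≠ x ∧ ∀ z : V, (z = x ∨ G.Adj x z) → (z = y ∨ G.Adj y z)

/-- `y` dominates `x` in the subgraph of `G` induced by `S`. -/
def DominatesOn {V : Type u} (G : SimpleGraph V) (S : Set V) (y x : V) : Prop :=
  y ≠ x ∧ ∀ z ∈ S, (z = x ∨ G.Adj x z) → (z = y ∨ G.Adj y z)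

/-- `r` (a well-order on `V`) is a construction order for `G`: every non-root vertex `x`
(i.e. one with a strictly earlier vertex) is dominated, in the subgraph induced by the
vertices up to and including `x`, by some strictly earlier vertex. -/
def ConstructionOrderSpec {V : Type u} (G : SimpleGraph V) (r : V → V → Prop) : Prop :=
  ∀ x : V, (∃ y, r y x) → ∃ y, r y x ∧ DominatesOn G {z | r z x ∨ z = x} y x

/-- A graph is constructible if it has a construction order. -/
def Constructible {V : Type u} (G : SimpleGraph V) : Prop :=
  ∃ r : V → V → Prop, IsWellOrder V r ∧ ConstructionOrderSpec G r

/-- Given a cop strategy `σ` (a function of the robber's history of positions) and a robber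
position sequence `r`, the cop's position at time `n`: the cop has seen the robber's first
`n` positions when making his `n`-th move. `copPos σ r 0 = σ []` is the cop's start. -/
def copPos {V : Type u} (σ : List V → V) (r : ℕ → V) (n : ℕ) : V :=
  σ (List.ofFn fun i : Fin n => r i.val)

/-- A cop strategy is legal if each successive position is equal or adjacent to the previous one. -/
def LegalCop {V : Type u} (G : SimpleGraph V) (σ : List V → V) : Prop :=
  ∀ l : List V, l ≠ [] → σ l = σ l.dropLast ∨ G.Adj (σ l.dropLast) (σ l)

/-- A legal robber position sequence: each move is to an adjacent vertex or staying put. -/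
def LegalRun {V : Type u} (G : SimpleGraph V) (r : ℕ → V) : Prop :=
  ∀ n : ℕ, r (n + 1) = r n ∨ G.Adj (r n) (r (n + 1))

/-- The cop catches the robber: at some time their positions coincide (either just after the
robber's move, or just after the cop's move). -/
def Caught {V : Type u} (σ : List V → V) (r : ℕ → V) : Prop :=
  ∃ n : ℕ, copPos σ r n = r n ∨ copPos σ r (n + 1) = r n

/-- `G` is cop-win: the cop has a legal strategy catching every legal robber play. -/
def CopWin {V : Type u} (G : SimpleGraph V) : Prop :=
  ∃ σ : List V → V, LegalCop G σ ∧ ∀ r : ℕ → V, LegalRun G r → Caught σ r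

/-- `G` is a weak cop win: the cop has a legal strategy guaranteeing that in every legal robber
play, either the robber is caught or the robber occupies each vertex at only finitely many times. -/
def WeakCopWin {V : Type u} (G : SimpleGraph V) : Prop :=
  ∃ σ : List V → V, LegalCop G σ ∧
    ∀ r : ℕ → V, LegalRun G r → Caught σ r ∨ ∀ v : V, {n : ℕ | r n = v}.Finite

/-- The subgraph of `G` induced by the finite set `S` is constructible with root `root` and
domination map `δ`: there is an enumeration of `S` starting at `root` in which every later
vertex `e k` is dominated, in the subgraph induced by the vertices added so far, by the
strictly earlier vertex `δ (e k)`. -/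
def ConstructibleOn {V : Type u} (G : SimpleGraph V) (S : Set V) (root : V) (δ : V → V) : Prop :=
  ∃ (n : ℕ) (e : Fin (n + 1) → V),
    Function.Injective e ∧ Set.range e = S ∧ e 0 = root ∧
    ∀ k : Fin (n + 1), k ≠ 0 →
      (∃ j : Fin (n + 1), j < k ∧ e j = δ (e k)) ∧
      DominatesOn G (e '' {j | j ≤ k}) (δ (e k)) (e k)

/-- `G` is consistently locally constructible: there is a nested sequence of finite induced
subgraphs `G[S i]` covering `G`, with roots `v i` and domination maps `δ i`, each `G[S i]`
being constructible with root `v i` and domination map `δ i`, and the maps `δ i` agreeing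
wherever they are both defined. -/
def ConsistentlyLocallyConstructible {V : Type u} (G : SimpleGraph V) : Prop :=
  ∃ (S : ℕ → Set V) (v : ℕ → V) (δ : ℕ → V → V),
    (∀ i, (S i).Finite) ∧ Monotone S ∧ (⋃ i, S i) = Set.univ ∧
    (∀ i, v i ∈ S i) ∧
    (∀ i, ConstructibleOn G (S i) (v i) (δ i)) ∧
    (∀ i j x, x ∈ S i → x ≠ v i → x ∈ S j → x ≠ v j → δ i x = δ j x)

section aux
variable {V : Type u} {α : Type} [LinearOrder α]

def EqAdj (G : SimpleGraph V) (x y : V) : Prop := x = y ∨ G.Adj x y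

theorem EqAdj.symm' {G : SimpleGraph V} {x y : V} (h : EqAdj G x y) : EqAdj G y x := by
  rcases h with h | h
  · exact Or.inl h.symm
  · exact Or.inr h.symm

noncomputable def kk (F : V → α) (D : V → V) (t x : V) : ℕ := sInf {n | F (D^[n] x) ≤ F t}

noncomputable def rho (F : V → α) (D : V → V) (t x : V) : V := D^[kk F D t x] x

structure Good (G : SimpleGraph V) (F : V → α) (D : V → V) : Prop where
  lt : ∀ x, D x = x ∨ F (D x) < F x
  dom : ∀ x z, F z ≤ F x → EqAdj G x z → EqAdj G (D x) z
  meet : ∀ x y, ∃ m n, D^[m] x = D^[n] y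

variable {G : SimpleGraph V} {F : V → α} {D : V → V}

theorem Good.le (h : Good G F D) (x : V) (n : ℕ) : F (D^[n] x) ≤ F x := by
  induction n with
  | zero => simp
  | succ n ih =>
    rw [Function.iterate_succ_apply']
    rcases h.lt (D^[n] x) with e | e
    · rw [e]; exact ih
    · exact e.le.trans ih

theorem Good.fix (h : Good G F D) (x : V) (n : ℕ) (e : F x ≤ F (D^[n] x)) : D^[n] x = x := by
  cases n with
  | zero => simp
  | succ n =>
    rcases h.lt x with e' | e'
    · exact Function.iterate_fixed e' _
    · rw [Function.iterate_succ_apply] at e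
      exact absurd (h.le (D x) n) (not_le.2 (e'.trans_le e))

theorem Good.spec (h : Good G F D) (t x : V) : F (rho F D t x) ≤ F t := by
  have : {n | F (D^[n] x) ≤ F t}.Nonempty := by
    obtain ⟨m, n, e⟩ := h.meet x t
    exact ⟨m, by show F (D^[m] x) ≤ F t; rw [e]; exact h.le t n⟩
  exact Nat.sInf_mem this

theorem kk_lt {t x : V} {j : ℕ} (hj : j < kk F D t x) : F t < F (D^[j] x) :=
  not_le.1 (Nat.notMem_of_lt_sInf hj)

theorem kk_le {t x : V} {j : ℕ} (hj : F (D^[j] x) ≤ F t) : kk F D t x ≤ j :=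
  Nat.sInf_le hj

theorem Good.kk_succ (h : Good G F D) {t x : V} (hx : F t < F x) :
    kk F D t x = kk F D t (D x) + 1 := by
  apply le_antisymm
  · apply kk_le
    rw [Function.iterate_succ_apply]
    exact h.spec t (D x)
  · by_contra hc
    have h0 : F (D^[kk F D t x] x) ≤ F t := h.spec t x
    rcases hk : kk F D t x with _ | j
    · rw [hk] at h0; exact absurd hx (not_lt.2 h0)
    · rw [hk, Function.iterate_succ_apply] at h0
      have := kk_le h0
      omega

theorem Good.hom (h : Good G F D) (t : V) : ∀ (N : ℕ) (x y : V), kk F D t x + kk F D t y ≤ N →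
    EqAdj G x y → EqAdj G (rho F D t x) (rho F D t y) := by
  have key : ∀ x y, F x ≤ F y → EqAdj G x y → F t < F y → EqAdj G x (D y) :=
    fun x y h1 h2 _ => (h.dom y x h1 h2.symm').symm'
  have rs : ∀ y, F t < F y → rho F D t y = rho F D t (D y) := by
    intro y hy
    unfold rho
    rw [h.kk_succ hy, Function.iterate_succ_apply]
  have r0 : ∀ y, F y ≤ F t → rho F D t y = y := by
    intro y hy
    have : kk F D t y = 0 := Nat.le_zero.1 (kk_le hy)
    unfold rho; rw [this]; rfl
  intro N
  induction N with
  | zero =>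
    intro x y hN hE
    have hx : kk F D t x = 0 := by omega
    have hy : kk F D t y = 0 := by omega
    unfold rho; rw [hx, hy]; exact hE
  | succ N ih =>
    intro x y hN hE
    by_cases hm : F x ≤ F t ∧ F y ≤ F t
    · rw [r0 x hm.1, r0 y hm.2]; exact hE
    · rcases le_total (F x) (F y) with hxy | hxy
      · have hy : F t < F y := by
          by_contra hc
          exact hm ⟨hxy.trans (not_lt.1 hc), not_lt.1 hc⟩
        rw [rs y hy]
        have := h.kk_succ hy
        exact ih _ _ (by omega) (key x y hxy hE hy)
      · have hx : F t < F x := by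
          by_contra hc
          exact hm ⟨not_lt.1 hc, hxy.trans (not_lt.1 hc)⟩
        rw [rs x hx]
        have := h.kk_succ hx
        exact ih _ _ (by omega) (key y x hxy hE.symm' hx).symm'

theorem Good.rho_iter (h : Good G F D) (x : V) (j : ℕ) :
    rho F D (D^[j] x) x = D^[j] x := by
  have h1 : kk F D (D^[j] x) x ≤ j := kk_le le_rfl
  have h2 := h.spec (D^[j] x) x
  unfold rho at *
  obtain ⟨i, hi⟩ := Nat.exists_eq_add_of_le' h1
  set k := kk F D (D^[j] x) x
  have e : D^[j] x = D^[i] (D^[k] x) := by rw [hi, Function.iterate_add_apply]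
  rw [e] at h2 ⊢
  exact (h.fix _ _ h2).symm

theorem Good.kk_rho (h : Good G F D) (t x : V) : kk F D (rho F D t x) x = kk F D t x := by
  apply le_antisymm
  · exact kk_le le_rfl
  · exact kk_le ((h.spec (rho F D t x) x).trans (h.spec t x))

noncomputable def tgt (F : V → α) (D : V → V) (c r : V) : V := D^[kk F D c r - 1] r

open Classical in
noncomputable def nxt (F : V → α) (D : V → V) (c r r' : V) : V :=
  if rho F D c r = c then rho F D (tgt F D c r) r' else D c

open Classical in
noncomputable def gnxt (G : SimpleGraph V) (F : V → α) (D : V → V) (c r r' : V) : V :=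
  if EqAdj G c (nxt F D c r r') then nxt F D c r r' else c

theorem Good.legal (h : Good G F D) {c r r' : V} (hE : EqAdj G r r') :
    gnxt G F D c r r' = nxt F D c r r' := by
  unfold gnxt
  rw [if_pos]
  unfold nxt
  split_ifs with hc
  · have h1 : EqAdj G (tgt F D c r) (rho F D (tgt F D c r) r') := by
      have := h.hom (tgt F D c r) _ r r' le_rfl hE
      have e : rho F D (tgt F D c r) r = tgt F D c r := h.rho_iter r _
      rwa [e] at this
    rcases hk : kk F D c r with _ | k
    · have : tgt F D c r = c := by
        conv_rhs => rw [← hc]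
        unfold tgt rho; rw [hk]
      rwa [this] at h1 ⊢
    · have : D (tgt F D c r) = c := by
        conv_rhs => rw [← hc]
        unfold tgt rho
        rw [hk, Function.iterate_succ_apply']; rfl
      have := h.dom _ _ (h.spec (tgt F D c r) r') h1
      simp_all
  · exact (h.dom c c le_rfl (Or.inl rfl)).symm'

noncomputable def strat (G : SimpleGraph V) (F : V → α) (D : V → V) (c0 : V) (l : List V) : V × V :=
  l.foldl (fun s x => (gnxt G F D s.1 s.2 x, x)) (c0, c0)

theorem Good.weak (h : Good G F D) (c0 : V) : WeakCopWin G := by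
  have sc : ∀ l x, strat G F D c0 (l ++ [x]) =
      (gnxt G F D (strat G F D c0 l).1 (strat G F D c0 l).2 x, x) := by
    intro l x
    simp [strat, List.foldl_append]
  refine ⟨fun l => (strat G F D c0 l).1, ?_, ?_⟩
  · intro l hl
    obtain ⟨l', x, rfl⟩ : ∃ l' x, l = l' ++ [x] :=
      ⟨l.dropLast, l.getLast hl, (List.dropLast_append_getLast hl).symm⟩
    simp only [List.dropLast_concat, sc]
    unfold gnxt
    split_ifs with hh
    · exact hh.imp Eq.symm id
    · exact Or.inl rfl
  · intro r hr
    rw [or_iff_not_imp_left]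
    intro hC v
    set S : ℕ → V × V := fun n => strat G F D c0 (List.ofFn fun i : Fin n => r i.val) with hS
    have Ss : ∀ n, S (n+1) = (gnxt G F D (S n).1 (S n).2 (r n), r n) := by
      intro n
      simp only [hS]
      rw [List.ofFn_succ', List.concat_eq_append, sc]
      simp
    set c : ℕ → V := fun n => (S (n+1)).1 with hc
    have cs : ∀ n, c (n+1) = nxt F D (c n) (r n) (r (n+1)) := by
      intro n
      simp only [hc]
      rw [Ss (n+1), Ss n]
      apply h.legal
      exact (hr n).imp Eq.symm id
    have unc : ∀ n, c n ≠ r n := fun n e => hC ⟨n, Or.inr e⟩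
    by_contra hinf
    have hinf : {n | r n = v}.Infinite := hinf
    have hA : ∃ n0, rho F D (c n0) (r n0) = c n0 := by
      by_contra hno
      push Not at hno
      have hit : ∀ n, c n = D^[n] (c 0) := by
        intro n
        induction n with
        | zero => rfl
        | succ n ih =>
          rw [cs n, nxt, if_neg (hno n), ih, Function.iterate_succ_apply']
      obtain ⟨p, q, e⟩ := h.meet v (c 0)
      obtain ⟨n, hn, hqn⟩ := hinf.exists_gt q
      have hn : r n = v := hn
      apply hno n
      have : c n = D^[n - q + p] (r n) := by
        rw [hit n, hn, Function.iterate_add_apply, e, ← Function.iterate_add_apply]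
        congr 2; omega
      rw [this]
      exact h.rho_iter _ _
    obtain ⟨n0, hn0⟩ := hA
    have hB : ∀ n, n0 ≤ n → rho F D (c n) (r n) = c n := by
      intro n hn
      induction n, hn using Nat.le_induction with
      | base => exact hn0
      | succ n hn ih =>
        rw [cs n, nxt, if_pos ih]
        exact h.rho_iter _ _
    set T : ℕ → V := fun n => tgt F D (c n) (r n) with hT
    have cT : ∀ n, n0 ≤ n → c (n+1) = rho F D (T n) (r (n+1)) := by
      intro n hn
      rw [cs n, nxt, if_pos (hB n hn)]
    have kT : ∀ n, n0 ≤ n → kk F D (c (n+1)) (r (n+1)) = kk F D (T n) (r (n+1)) := by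
      intro n hn
      rw [cT n hn, h.kk_rho]
    have kpos : ∀ n, n0 ≤ n → 0 < kk F D (c n) (r n) := by
      intro n hn
      by_contra h0
      have h0 : kk F D (c n) (r n) = 0 := by omega
      have := hB n hn
      rw [rho, h0] at this
      exact unc n this.symm
    have Tm : ∀ n m, n0 ≤ n → n ≤ m → F (T n) ≤ F (T m) := by
      intro n m hn hm
      induction m, hm using Nat.le_induction with
      | base => exact le_rfl
      | succ m hm ih =>
        refine ih.trans (le_of_lt ?_)
        have h1 := kpos (m+1) (by omega)
        have h2 := kT m (by omega)
        show F (T m) < F (D^[kk F D (c (m+1)) (r (m+1)) - 1] (r (m+1)))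
        exact kk_lt (by omega)
    have dec : ∀ n m, n0 ≤ n → n < m → r n = v → r m = v →
        kk F D (c m) v < kk F D (c n) v := by
      intro n m hn hm e1 e2
      obtain ⟨m, rfl⟩ : ∃ m', m = m' + 1 := ⟨m - 1, by omega⟩
      have h1 := kT m (by omega)
      have h2 := Tm n m hn (by omega)
      have h3 := kpos n hn
      have h4 : F (D^[kk F D (c n) v - 1] v) ≤ F (T m) := by
        simpa only [hT, tgt, e1] using h2
      rw [e2] at h1
      rw [e1] at h3
      have := kk_le h4
      omega
    have : ∀ K n, n0 ≤ n → r n = v → kk F D (c n) v ≤ K → False := by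
      intro K
      induction K with
      | zero =>
        intro n hn e hK
        obtain ⟨m, hm, hnm⟩ := hinf.exists_gt n
        have := dec n m hn hnm e hm
        omega
      | succ K ih =>
        intro n hn e hK
        obtain ⟨m, hm, hnm⟩ := hinf.exists_gt n
        have := dec n m hn hnm e hm
        exact ih m (by omega) hm (by omega)
    obtain ⟨n, hn, hn'⟩ := hinf.exists_gt n0
    exact this _ n hn'.le hn le_rfl

theorem rank_of_constr {S : Set V} {root : V} {δ : V → V} (h : ConstructibleOn G S root δ) :
    ∃ f : V → ℕ, ∀ x ∈ S, x ≠ root → δ x ∈ S ∧ f (δ x) < f x ∧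
      ∀ z ∈ S, f z ≤ f x → EqAdj G x z → EqAdj G (δ x) z := by
  obtain ⟨n, e, hinj, hS, h0, hk⟩ := h
  refine ⟨fun x => (Function.invFun e x).val, ?_⟩
  have hl : ∀ j, Function.invFun e (e j) = j := Function.leftInverse_invFun hinj
  subst hS
  rintro _ ⟨k, rfl⟩ hr
  obtain ⟨⟨j, hj, hje⟩, hd⟩ := hk k (by rintro rfl; exact hr h0)
  refine ⟨⟨j, hje⟩, ?_, ?_⟩
  · rw [← hje]; simp only [hl]; exact hj
  · rintro _ ⟨i, rfl⟩ hik hE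
    simp only [hl] at hik
    exact (hd.2 (e i) ⟨i, hik, rfl⟩ (hE.imp Eq.symm id)).imp Eq.symm id

end aux

theorem weakCopWin_of_consistentlyLocallyConstructible {V : Type u} (G : SimpleGraph V)
    (h : ConsistentlyLocallyConstructible G) : WeakCopWin G := by
  classical
  obtain ⟨S, v, δ, -, hmono, hcov, hv, hcon, hcons⟩ := h
  choose f hf using fun i => rank_of_constr (hcon i)
  let U : Ultrafilter ℕ := Filter.hyperfilter ℕ
  have hmem : ∀ x, ∀ᶠ i in (U : Filter ℕ), x ∈ S i := by
    intro x
    have : x ∈ ⋃ i, S i := by rw [hcov]; trivial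
    obtain ⟨i, hi⟩ := Set.mem_iUnion.1 this
    have h1 : ∀ᶠ j in Filter.atTop, x ∈ S j :=
      (Filter.eventually_ge_atTop i).mono fun j hj => hmono hj hi
    exact Nat.hyperfilter_le_atTop h1
  let F : V → (U : Filter ℕ).Germ ℕ := fun x => ((fun i => f i x : ℕ → ℕ) : (U : Filter ℕ).Germ ℕ)
  let isRoot : V → Prop := fun x => ∀ᶠ i in (U : Filter ℕ), x = v i
  have hnr : ∀ x, ¬ isRoot x → ∀ᶠ i in (U : Filter ℕ), x ≠ v i := fun x hx =>
    Ultrafilter.eventually_not.2 hx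
  have hDex : ∀ x, ∃ d, (isRoot x → d = x) ∧
      (¬ isRoot x → ∀ i, x ∈ S i → x ≠ v i → d = δ i x) := by
    intro x
    by_cases hx : isRoot x
    · exact ⟨x, fun _ => rfl, fun h => absurd hx h⟩
    · obtain ⟨i, hi, hi'⟩ := ((hmem x).and (hnr x hx)).exists
      exact ⟨δ i x, fun h => absurd h hx, fun _ j hj hj' => hcons i j x hi hi' hj hj'⟩
  choose D hD1 hD2 using hDex
  have good : Good G F D := by
    refine ⟨?_, ?_, ?_⟩
    · intro x
      by_cases hx : isRoot x
      · exact Or.inl (hD1 x hx)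
      · right
        apply Filter.Germ.coe_lt.2
        filter_upwards [hmem x, hnr x hx] with i h1 h2
        rw [hD2 x hx i h1 h2]
        exact (hf i x h1 h2).2.1
    · intro x z hz hE
      by_cases hx : isRoot x
      · rw [hD1 x hx]; exact hE
      · have hz' := Filter.Germ.coe_le.1 hz
        obtain ⟨i, ⟨⟨h1, h2⟩, h3⟩, h4⟩ := (((hmem x).and (hnr x hx)).and (hmem z)).and hz' |>.exists
        rw [hD2 x hx i h1 h2]
        exact (hf i x h1 h2).2.2 z h3 h4 hE
    · intro x y
      have hr : ∀ᶠ i in (U : Filter ℕ), ∀ z, isRoot z → z = v i := by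
        by_cases hex : ∃ z, isRoot z
        · obtain ⟨z, hz⟩ := hex
          filter_upwards [hz] with i hi w hw
          obtain ⟨j, h1, h2⟩ := (hz.and hw).exists
          rw [← hi, h1, h2]
        · exact Filter.Eventually.of_forall fun i z hz => absurd ⟨z, hz⟩ hex
      obtain ⟨i, ⟨hx, hy⟩, hi⟩ := (((hmem x).and (hmem y)).and hr).exists
      have reach : ∀ N, ∀ z ∈ S i, f i z ≤ N → ∃ n, D^[n] z = v i := by
        intro N
        induction N with
        | zero =>
          intro z hz hN
          by_cases e : z = v i
          · exact ⟨0, e⟩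
          · have := (hf i z hz e).2.1
            omega
        | succ N ih =>
          intro z hz hN
          by_cases e : z = v i
          · exact ⟨0, e⟩
          · have h1 := hf i z hz e
            have h2 : D z = δ i z := hD2 z (fun h => e (hi z h)) i hz e
            rw [← h2] at h1
            obtain ⟨n, hn⟩ := ih (D z) h1.1 (by omega)
            exact ⟨n+1, hn⟩
      obtain ⟨m, hm⟩ := reach _ x hx le_rfl
      obtain ⟨n, hn⟩ := reach _ y hy le_rfl
      exact ⟨m, n, hm.trans hn.symm⟩
  exact good.weak (v 0)
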